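/- Let n ∈ ℕ, let f : {0,1}^n → ℝ, and let 0 < p < r < 1. Then ((p/r)·((1−r)/(1−p)))^n · Var_p(f) ≤ Var_r(E_{p/r}[f(ψ·ξ) | ψ]). -/

import Mathlib

/-!
Averaging a one-bit function `g` over `ξ` preserves its mean and multiplies its variance by exactly
`c = (p / r) * ((1 - r) / (1 - p))`, so its second moment becomes `c * E g² + (1 - c) * (E g)²`. As
`c ≤ 1`, this is at least `c * E g²`, and lower bounds on second moments tensorize: on `n` bits the
second moment of `f` shrinks by a factor of at worst `c ^ n`. For the centred function `f - E p f`
second moments are variances.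
-/

open Finset Filter

namespace PartialObs

/-- Weight of a configuration `ω ∈ {0,1}^n` under the product measure `ℙ_p`. -/
noncomputable def w {n : ℕ} (p : ℝ) (ω : Fin n → Bool) : ℝ :=
  ∏ i, if ω i then p else 1 - p

/-- Expectation with respect to `ℙ_p`. -/
noncomputable def E {n : ℕ} (p : ℝ) (f : (Fin n → Bool) → ℝ) : ℝ :=
  ∑ ω : Fin n → Bool, w p ω * f ω

/-- Variance with respect to `ℙ_p`. -/
noncomputable def Var {n : ℕ} (p : ℝ) (f : (Fin n → Bool) → ℝ) : ℝ :=
  E p (fun ω => (f ω - E p f) ^ 2)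

/-- Coordinatewise product `ψ·ξ` of two configurations. -/
def prodCfg {n : ℕ} (ψ ξ : Fin n → Bool) : Fin n → Bool := fun i => ψ i && ξ i

/-- The conditional expectation `E_{p/r}[f(ψ·ξ) | ψ]`, as a function of `ψ`:
`ξ` is integrated out according to `ℙ_{p/r}`. -/
noncomputable def condExp {n : ℕ} (p r : ℝ) (f : (Fin n → Bool) → ℝ)
    (ψ : Fin n → Bool) : ℝ :=
  E (p / r) (fun ξ => f (prodCfg ψ ξ))

/-- Expectation of `g : {0,1} → ℝ` at a single bit that is `1` with probability `p`. -/
def bitE (p : ℝ) (g : Bool → ℝ) : ℝ :=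
  (1 - p) * g false + p * g true

/-- The squared correlation coefficient of the bits `ψ i` and `ψ i * ξ i`, where `ψ ∼ ℙ_r` and
`ξ ∼ ℙ_{p/r}` are independent. The covariance of the two bits is `p * (1 - r)` and their variances
are `r * (1 - r)` and `p * (1 - p)`. -/
noncomputable def bitCorrSq (p r : ℝ) : ℝ :=
  p / r * ((1 - r) / (1 - p))

section OneBit

variable {p r : ℝ}

lemma bitE_mono (hp : 0 ≤ p) (hp1 : p ≤ 1) {g h : Bool → ℝ} (hgh : ∀ x, g x ≤ h x) :
    bitE p g ≤ bitE p h :=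
  add_le_add (mul_le_mul_of_nonneg_left (hgh false) (sub_nonneg.2 hp1))
    (mul_le_mul_of_nonneg_left (hgh true) hp)

lemma bitE_const_mul (p a : ℝ) (g : Bool → ℝ) : bitE p (fun x => a * g x) = a * bitE p g := by
  unfold bitE
  ring

lemma bitE_sub_const (p a : ℝ) (g : Bool → ℝ) : bitE p (fun x => g x - a) = bitE p g - a := by
  unfold bitE
  ring

lemma bitE_bitE_and (r q : ℝ) (g : Bool → ℝ) :
    bitE r (fun x => bitE q (fun y => g (x && y))) = bitE (r * q) g := by
  simp only [bitE, Bool.false_and, Bool.true_and]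
  ring

lemma bitCorrSq_nonneg (hp : 0 ≤ p) (hpr : p ≤ r) (hr : r ≤ 1) : 0 ≤ bitCorrSq p r :=
  mul_nonneg (div_nonneg hp (hp.trans hpr))
    (div_nonneg (sub_nonneg.2 hr) (sub_nonneg.2 (hpr.trans hr)))

lemma bitCorrSq_le_one (hr : 0 ≤ r) (hpr : p ≤ r) (hp : p ≤ 1) : bitCorrSq p r ≤ 1 := by
  rw [bitCorrSq, div_mul_div_comm]
  refine div_le_one_of_le₀ ?_ (mul_nonneg hr (sub_nonneg.2 hp))
  linarith

lemma bitE_sq_bitE_and_sub (hr : r ≠ 0) (hp : p ≠ 1) (g : Bool → ℝ) :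
    bitE r (fun x => bitE (p / r) (fun y => g (x && y)) ^ 2)
        - bitCorrSq p r * bitE p (fun x => g x ^ 2)
      = (1 - bitCorrSq p r) * bitE p g ^ 2 := by
  have hp' : 1 - p ≠ 0 := sub_ne_zero.2 hp.symm
  simp only [bitE, bitCorrSq, Bool.false_and, Bool.true_and]
  field_simp
  ring

lemma bitCorrSq_mul_bitE_sq_le (hr : 0 < r) (hpr : p ≤ r) (hp : p < 1) (g : Bool → ℝ) :
    bitCorrSq p r * bitE p (fun x => g x ^ 2) ≤
      bitE r (fun x => bitE (p / r) (fun y => g (x && y)) ^ 2) := by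
  rw [← sub_nonneg, bitE_sq_bitE_and_sub hr.ne' hp.ne]
  exact mul_nonneg (sub_nonneg.2 (bitCorrSq_le_one hr.le hpr hp.le)) (sq_nonneg _)

end OneBit

section Expectation

variable {n : ℕ}

lemma w_nonneg {p : ℝ} (hp : 0 ≤ p) (hp1 : p ≤ 1) (ω : Fin n → Bool) : 0 ≤ w p ω :=
  prod_nonneg fun i _ => by split_ifs <;> linarith

lemma E_mono {p : ℝ} (hp : 0 ≤ p) (hp1 : p ≤ 1) {f g : (Fin n → Bool) → ℝ}
    (hfg : ∀ ω, f ω ≤ g ω) : E p f ≤ E p g :=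
  sum_le_sum fun ω _ => mul_le_mul_of_nonneg_left (hfg ω) (w_nonneg hp hp1 ω)

lemma E_const_mul (p a : ℝ) (f : (Fin n → Bool) → ℝ) : E p (fun ω => a * f ω) = a * E p f := by
  simp only [E, mul_sum, mul_left_comm]

lemma E_bitE (p q : ℝ) (f : Bool → (Fin n → Bool) → ℝ) :
    E p (fun ω => bitE q (fun x => f x ω)) = bitE q (fun x => E p (f x)) := by
  simp only [E, bitE, mul_add, sum_add_distrib, mul_sum, mul_left_comm]

lemma E_fin_zero (p : ℝ) (f : (Fin 0 → Bool) → ℝ) : E p f = f default := by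
  rw [E, Fintype.sum_subsingleton _ default, w, Fin.prod_univ_zero, one_mul]

lemma E_fin_succ (p : ℝ) (f : (Fin (n + 1) → Bool) → ℝ) :
    E p f = bitE p (fun x => E p (fun ω : Fin n → Bool => f (Fin.cons x ω))) := by
  unfold E bitE
  rw [← (Fin.consEquiv fun _ => Bool).sum_comp, Fintype.sum_prod_type, Fintype.sum_bool,
    mul_sum, mul_sum, add_comm]
  simp [w, Fin.consEquiv, Fin.prod_univ_succ, mul_assoc]

lemma E_sub_const (p a : ℝ) (f : (Fin n → Bool) → ℝ) : E p (fun ω => f ω - a) = E p f - a := by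
  induction n with
  | zero => simp only [E_fin_zero]
  | succ n ih => simp only [E_fin_succ, ih, bitE_sub_const]

end Expectation

section Thinning

variable {n : ℕ}

lemma prodCfg_cons (x y : Bool) (ψ ξ : Fin n → Bool) :
    prodCfg (Fin.cons x ψ : Fin (n + 1) → Bool) (Fin.cons y ξ) =
      Fin.cons (x && y) (prodCfg ψ ξ) := by
  funext i
  cases i using Fin.cases <;> simp [prodCfg]

lemma E_E_prodCfg (r q : ℝ) (f : (Fin n → Bool) → ℝ) :
    E r (fun ψ => E q (fun ξ => f (prodCfg ψ ξ))) = E (r * q) f := by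
  induction n with
  | zero => simp only [E_fin_zero, Subsingleton.elim (prodCfg _ _) default]
  | succ n ih =>
    let slice (x : Bool) (ω : Fin n → Bool) : ℝ := f (Fin.cons x ω)
    calc E r (fun ψ => E q (fun ξ => f (prodCfg ψ ξ)))
        = bitE r (fun x => bitE q (fun y =>
            E r (fun ψ => E q (fun ξ => slice (x && y) (prodCfg ψ ξ))))) := by
          simp only [E_fin_succ, prodCfg_cons, E_bitE, slice]
      _ = bitE r (fun x => bitE q (fun y => E (r * q) (slice (x && y)))) := by simp only [ih]
      _ = bitE (r * q) (fun x => E (r * q) (slice x)) :=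
          bitE_bitE_and r q fun x => E (r * q) (slice x)
      _ = E (r * q) f := (E_fin_succ (r * q) f).symm

lemma E_condExp {r : ℝ} (hr : r ≠ 0) (p : ℝ) (f : (Fin n → Bool) → ℝ) :
    E r (condExp p r f) = E p f :=
  calc E r (condExp p r f) = E (r * (p / r)) f := E_E_prodCfg r (p / r) f
    _ = E p f := by rw [mul_div_cancel₀ p hr]

lemma condExp_sub_const (p r a : ℝ) (f : (Fin n → Bool) → ℝ) (ψ : Fin n → Bool) :
    condExp p r (fun ω => f ω - a) ψ = condExp p r f ψ - a :=
  E_sub_const _ _ _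

lemma condExp_fin_zero (p r : ℝ) (f : (Fin 0 → Bool) → ℝ) (ψ : Fin 0 → Bool) :
    condExp p r f ψ = f default := by
  rw [condExp, E_fin_zero, Subsingleton.elim (prodCfg _ _) default]

lemma condExp_cons (p r : ℝ) (f : (Fin (n + 1) → Bool) → ℝ) (x : Bool) (ψ : Fin n → Bool) :
    condExp p r f (Fin.cons x ψ) =
      bitE (p / r) (fun y => condExp p r (fun ω => f (Fin.cons (x && y) ω)) ψ) := by
  simp only [condExp, E_fin_succ, prodCfg_cons]

lemma bitCorrSq_pow_mul_E_sq_le {p r : ℝ} (hp : 0 < p) (hpr : p ≤ r) (hr : r < 1)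
    (f : (Fin n → Bool) → ℝ) :
    bitCorrSq p r ^ n * E p (fun ω => f ω ^ 2) ≤ E r (fun ψ => condExp p r f ψ ^ 2) := by
  have hr0 : 0 < r := hp.trans_le hpr
  have hp1 : p < 1 := hpr.trans_lt hr
  induction n with
  | zero => simp only [E_fin_zero, condExp_fin_zero, pow_zero, one_mul, le_refl]
  | succ n ih =>
    let c : ℝ := bitCorrSq p r
    have hc : 0 ≤ c := bitCorrSq_nonneg hp.le hpr hr.le
    let slice (x : Bool) (ω : Fin n → Bool) : ℝ := f (Fin.cons x ω)
    calc c ^ (n + 1) * E p (fun ω => f ω ^ 2)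
        = c * bitE p (fun x => c ^ n * E p (fun ω => slice x ω ^ 2)) := by
          rw [E_fin_succ, bitE_const_mul, pow_succ', mul_assoc]
      _ ≤ c * bitE p (fun x => E r (fun ψ => condExp p r (slice x) ψ ^ 2)) :=
          mul_le_mul_of_nonneg_left (bitE_mono hp.le hp1.le fun x => ih (slice x)) hc
      _ = E r (fun ψ => c * bitE p (fun x => condExp p r (slice x) ψ ^ 2)) := by
          rw [E_const_mul, E_bitE]
      _ ≤ E r (fun ψ => bitE r (fun x =>
            bitE (p / r) (fun y => condExp p r (slice (x && y)) ψ) ^ 2)) :=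
          E_mono hr0.le hr.le fun ψ => bitCorrSq_mul_bitE_sq_le hr0 hpr hp1 _
      _ = E r (fun ψ => condExp p r f ψ ^ 2) := by
          simp only [E_bitE, E_fin_succ, condExp_cons, slice]

end Thinning

/-- the two-scale variance lower bound
`((p/r)·((1−r)/(1−p)))^n · Var_p(f) ≤ Var_r(E_{p/r}[f(ψ·ξ) | ψ])`. -/
theorem two_scale_variance_lower_bound {n : ℕ} (f : (Fin n → Bool) → ℝ)
    (p r : ℝ) (hp : 0 < p) (hpr : p < r) (hr : r < 1) :
    (p / r * ((1 - r) / (1 - p))) ^ n * Var p f ≤ Var r (condExp p r f) := by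
  calc bitCorrSq p r ^ n * E p (fun ω => (f ω - E p f) ^ 2)
      ≤ E r (fun ψ => condExp p r (fun ω => f ω - E p f) ψ ^ 2) :=
        bitCorrSq_pow_mul_E_sq_le hp hpr.le hr _
    _ = E r (fun ψ => (condExp p r f ψ - E r (condExp p r f)) ^ 2) := by
        simp only [condExp_sub_const, E_condExp (hp.trans hpr).ne']

end PartialObs
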